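/- Let G = (V, E) be a two-coloured graph with strictly more blue nodes than red nodes. Let E* be the set of all non-edges of G that are not between two red nodes, i.e. E* consists of the non-edges joining a red node to a blue node together with the non-edges joining two blue nodes. Then the minimum of |E' \ E| over all feasible MIAE solutions E' equals the minimum of |S| over all edge sets S ⊆ E* satisfying: (i) for every red node v, the number of blue nodes u with uv ∈ S equals max(r(v) - b(v), 0); and (ii) for every blue node v, (the number of red nodes u with uv ∈ S) minus (the number of blue nodes u with uv ∈ S) is at most b(v) - r(v). Moreover, the sets E ∪ S for S attaining this minimum are exactly the optimal MIAE solutions. -/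

import Mathlib

/-!
If `E'` is inclusion-minimal among the feasible solutions, deleting an added edge `e` puts some
node `w` under illusion. Deleting one edge changes the blue degree by at most one, so `w` has
equally many red and blue neighbours in `E'`, and `e` joins `w` to a blue node. Hence `e` is not
red-red. If `e` is incident to a red node `v`, then `w = v`, so `v` received exactly
`max(r(v) - b(v), 0)` new blue neighbours. Thus every feasible solution contains `E ∪ S` for
some `S` satisfying the two conditions, while each such `E ∪ S` is feasible.
-/

open Finset

variable {V : Type*}

/-- Number of blue neighbours of `v` in the graph on `V` with edge set `E'`. -/
def blueDeg [Fintype V] [DecidableEq V] (f : V → Bool) (E' : Finset (Sym2 V)) (v : V) : ℕ :=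
  (Finset.univ.filter (fun u => u ≠ v ∧ s(u, v) ∈ E' ∧ f u = true)).card

/-- Number of red neighbours of `v` in the graph on `V` with edge set `E'`. -/
def redDeg [Fintype V] [DecidableEq V] (f : V → Bool) (E' : Finset (Sym2 V)) (v : V) : ℕ :=
  (Finset.univ.filter (fun u => u ≠ v ∧ s(u, v) ∈ E' ∧ f u = false)).card

/-- No node is under majority illusion in `(V, E')`. -/
def NoIllusion [Fintype V] [DecidableEq V] (f : V → Bool) (E' : Finset (Sym2 V)) : Prop :=
  ∀ v : V, redDeg f E' v ≤ blueDeg f E' v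

/-- An edge set of a simple graph contains no loops. -/
def Loopless (E' : Finset (Sym2 V)) : Prop := ∀ e ∈ E', ¬ e.IsDiag

/-- The availability graph: all non-edges of `G` that are not between two red nodes. -/
def avail [Fintype V] [DecidableEq V] (f : V → Bool) (E : Finset (Sym2 V)) : Finset (Sym2 V) :=
  Finset.univ.filter (fun e : Sym2 V => ¬ e.IsDiag ∧ e ∉ E ∧ ¬ (∀ v ∈ e, f v = false))

/-- The condition of the integer program (IP-1a): `S ⊆ E*`, every red node gets exactly
`max(r(v)-b(v),0)` new blue neighbours, and for every blue node the number of new red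
neighbours minus the number of new blue neighbours is at most `b(v) - r(v)`. -/
def addCond [Fintype V] [DecidableEq V] (f : V → Bool) (E S : Finset (Sym2 V)) : Prop :=
  S ⊆ avail f E ∧
  (∀ v : V, f v = false →
    (Finset.univ.filter (fun u => f u = true ∧ s(u, v) ∈ S)).card
      = redDeg f E v - blueDeg f E v) ∧
  (∀ v : V, f v = true →
    ((Finset.univ.filter (fun u => f u = false ∧ s(u, v) ∈ S)).card : ℤ)
      - ((Finset.univ.filter (fun u => f u = true ∧ s(u, v) ∈ S)).card : ℤ)
      ≤ (blueDeg f E v : ℤ) - (redDeg f E v : ℤ))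

theorem isLeast_iff_of_isCoinitialFor {α : Type*} [PartialOrder α] {s t : Set α} {a : α}
    (hts : t ⊆ s) (hst : IsCoinitialFor s t) : IsLeast s a ↔ IsLeast t a := by
  have hlb : lowerBounds s = lowerBounds t :=
    (lowerBounds_mono_set hts).antisymm (lowerBounds_mono_of_isCoinitialFor hst)
  refine ⟨fun ⟨has, ha⟩ => ⟨?_, hlb ▸ ha⟩, fun ⟨hat, ha⟩ => ⟨hts hat, hlb ▸ ha⟩⟩
  obtain ⟨b, hbt, hba⟩ := hst has
  rwa [(ha (hts hbt)).antisymm hba]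

section MajorityIllusion

variable [Fintype V] [DecidableEq V] {f : V → Bool} {c : Bool} {v w : V} {e : Sym2 V}
  {E E' S : Finset (Sym2 V)}

/-- The potential edges joining `v` to the nodes of colour `c`. The degrees of `v` are the
cardinalities of the intersections of the edge set with these sets. -/
def spokes (f : V → Bool) (c : Bool) (v : V) : Finset (Sym2 V) :=
  ({u | u ≠ v ∧ f u = c} : Finset V).image (s(·, v))

theorem mem_spokes : e ∈ spokes f c v ↔ ∃ u, (u ≠ v ∧ f u = c) ∧ s(u, v) = e := by
  simp only [spokes, mem_image, mem_filter_univ]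

theorem eq_of_mem_spokes_of_mem_spokes (hv : f v ≠ c) (hev : e ∈ spokes f c v)
    (hew : e ∈ spokes f c w) : w = v := by
  obtain ⟨u, -, rfl⟩ := mem_spokes.1 hev
  obtain ⟨x, ⟨-, hx⟩, h⟩ := mem_spokes.1 hew
  rcases Sym2.eq_iff.1 h with ⟨-, hwv⟩ | ⟨rfl, -⟩
  exacts [hwv, absurd hx hv]

theorem card_inter_spokes (f : V → Bool) (c : Bool) (E : Finset (Sym2 V)) (v : V) :
    #(E ∩ spokes f c v) = #{u | u ≠ v ∧ s(u, v) ∈ E ∧ f u = c} := by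
  rw [inter_comm, ← filter_mem_eq_inter, spokes, filter_image,
    card_image_of_injective _ fun _ _ => Sym2.congr_left.1, filter_filter]
  simp only [and_assoc, and_left_comm, and_comm]

theorem blueDeg_eq_card_inter_spokes (f : V → Bool) (E : Finset (Sym2 V)) (v : V) :
    blueDeg f E v = #(E ∩ spokes f true v) :=
  (card_inter_spokes f true E v).symm

theorem redDeg_eq_card_inter_spokes (f : V → Bool) (E : Finset (Sym2 V)) (v : V) :
    redDeg f E v = #(E ∩ spokes f false v) :=
  (card_inter_spokes f false E v).symm

theorem blueDeg_union (h : Disjoint E S) (v : V) :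
    blueDeg f (E ∪ S) v = blueDeg f E v + blueDeg f S v := by
  simp only [blueDeg_eq_card_inter_spokes, union_inter_distrib_right,
    card_union_of_disjoint (h.mono inter_subset_left inter_subset_left)]

theorem redDeg_union (h : Disjoint E S) (v : V) :
    redDeg f (E ∪ S) v = redDeg f E v + redDeg f S v := by
  simp only [redDeg_eq_card_inter_spokes, union_inter_distrib_right,
    card_union_of_disjoint (h.mono inter_subset_left inter_subset_left)]

theorem redDeg_mono (h : S ⊆ E) (v : V) : redDeg f S v ≤ redDeg f E v := by
  simp only [redDeg_eq_card_inter_spokes]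
  exact card_le_card (inter_subset_inter_right h)

theorem blueDeg_erase_of_notMem_spokes (h : e ∉ spokes f true v) :
    blueDeg f (E.erase e) v = blueDeg f E v := by
  rw [blueDeg_eq_card_inter_spokes, blueDeg_eq_card_inter_spokes, erase_inter,
    erase_eq_of_notMem fun he => h (mem_inter.1 he).2]

theorem blueDeg_le_blueDeg_erase_add_one (f : V → Bool) (E : Finset (Sym2 V)) (e : Sym2 V)
    (v : V) : blueDeg f E v ≤ blueDeg f (E.erase e) v + 1 := by
  rw [blueDeg_eq_card_inter_spokes, blueDeg_eq_card_inter_spokes, erase_inter]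
  exact tsub_le_iff_right.1 pred_card_le_card_erase

theorem exists_tight_of_not_noIllusion_erase (hE : NoIllusion f E)
    (he : ¬ NoIllusion f (E.erase e)) :
    ∃ w, e ∈ spokes f true w ∧ redDeg f E w = blueDeg f E w := by
  obtain ⟨w, hw⟩ : ∃ w, blueDeg f (E.erase e) w < redDeg f (E.erase e) w := by
    simpa only [NoIllusion, not_forall, not_le] using he
  have hred : redDeg f (E.erase e) w ≤ redDeg f E w := redDeg_mono (erase_subset e E) w
  have hblue : blueDeg f E w ≤ blueDeg f (E.erase e) w + 1 :=
    blueDeg_le_blueDeg_erase_add_one f E e w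
  refine ⟨w, ?_, (hE w).antisymm (by omega)⟩
  by_contra hew
  rw [blueDeg_erase_of_notMem_spokes hew] at hw
  exact (hw.trans_le hred).not_ge (hE w)

theorem mem_avail :
    e ∈ avail f E ↔ ¬ e.IsDiag ∧ e ∉ E ∧ ¬ ∀ v ∈ e, f v = false :=
  mem_filter_univ e

theorem loopless_of_subset_avail (hS : S ⊆ avail f E) : Loopless S :=
  fun _ he => (mem_avail.1 (hS he)).1

theorem disjoint_of_subset_avail (hS : S ⊆ avail f E) : Disjoint E S :=
  disjoint_right.2 fun _ he => (mem_avail.1 (hS he)).2.1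

theorem redDeg_eq_zero_of_subset_avail (hS : S ⊆ avail f E) (hv : f v = false) :
    redDeg f S v = 0 := by
  rw [redDeg_eq_card_inter_spokes, card_eq_zero, ← disjoint_iff_inter_eq_empty, disjoint_left]
  intro e he hev
  obtain ⟨u, ⟨-, hu⟩, rfl⟩ := mem_spokes.1 hev
  exact (mem_avail.1 (hS he)).2.2 (Sym2.ball.2 ⟨hu, hv⟩)

theorem Loopless.card_filter_color (hS : Loopless S) (f : V → Bool) (c : Bool) (v : V) :
    #{u | f u = c ∧ s(u, v) ∈ S} = #{u | u ≠ v ∧ s(u, v) ∈ S ∧ f u = c} := by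
  congr 1
  ext u
  have hne : s(u, v) ∈ S → u ≠ v := fun h => mt Sym2.mk_isDiag_iff.2 (hS _ h)
  simp only [mem_filter_univ]
  tauto

theorem addCond_iff :
    addCond f E S ↔ S ⊆ avail f E ∧
      (∀ v, f v = false → blueDeg f S v = redDeg f E v - blueDeg f E v) ∧
      ∀ v, f v = true → redDeg f (E ∪ S) v ≤ blueDeg f (E ∪ S) v := by
  refine and_congr_right fun hS => ?_
  have hloop : Loopless S := loopless_of_subset_avail hS
  simp only [hloop.card_filter_color, redDeg_union (disjoint_of_subset_avail hS),
    blueDeg_union (disjoint_of_subset_avail hS)]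
  refine and_congr Iff.rfl (forall₂_congr fun v _ => ?_)
  change (redDeg f S v : ℤ) - blueDeg f S v ≤ _ ↔ _
  omega

theorem noIllusion_union_iff (hS : S ⊆ avail f E) :
    NoIllusion f (E ∪ S) ↔
      (∀ v, f v = false → redDeg f E v - blueDeg f E v ≤ blueDeg f S v) ∧
      ∀ v, f v = true → redDeg f (E ∪ S) v ≤ blueDeg f (E ∪ S) v := by
  have hred (v : V) (hv : f v = false) :
      redDeg f (E ∪ S) v ≤ blueDeg f (E ∪ S) v ↔
        redDeg f E v - blueDeg f E v ≤ blueDeg f S v := by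
    rw [redDeg_union (disjoint_of_subset_avail hS), blueDeg_union (disjoint_of_subset_avail hS),
      redDeg_eq_zero_of_subset_avail hS hv, add_zero, tsub_le_iff_left]
  rw [← forall₂_congr hred]
  refine ⟨fun h => ⟨fun v _ => h v, fun v _ => h v⟩, fun h v => ?_⟩
  cases hv : f v
  exacts [h.1 v hv, h.2 v hv]

/-- `E'` is a feasible MIAE solution for the graph with edge set `E` coloured by `f`. -/
def IsFeasible (f : V → Bool) (E E' : Finset (Sym2 V)) : Prop :=
  E ⊆ E' ∧ Loopless E' ∧ NoIllusion f E'

theorem addCond.union_sdiff_self (h : addCond f E S) : (E ∪ S) \ E = S :=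
  union_sdiff_cancel_left (disjoint_of_subset_avail h.1)

theorem addCond.isFeasible (hE : Loopless E) (h : addCond f E S) : IsFeasible f E (E ∪ S) := by
  obtain ⟨hS, hred, hblue⟩ := addCond_iff.1 h
  refine ⟨subset_union_left, fun e he => ?_,
    (noIllusion_union_iff hS).2 ⟨fun v hv => (hred v hv).ge, hblue⟩⟩
  exact (mem_union.1 he).elim (hE e) (loopless_of_subset_avail hS e)

theorem exists_tight_of_minimal_isFeasible (h : Minimal (IsFeasible f E) E')
    (he : e ∈ E' \ E) : ∃ w, e ∈ spokes f true w ∧ redDeg f E' w = blueDeg f E' w := by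
  obtain ⟨hsub, hloop, hill⟩ := h.prop
  obtain ⟨heE', heE⟩ := mem_sdiff.1 he
  refine exists_tight_of_not_noIllusion_erase hill fun hill' =>
    h.not_prop_of_lt (erase_ssubset heE') ⟨subset_erase.2 ⟨hsub, heE⟩, ?_, hill'⟩
  exact fun x hx => hloop x (mem_of_mem_erase hx)

theorem sdiff_subset_avail_of_minimal_isFeasible (h : Minimal (IsFeasible f E) E') :
    E' \ E ⊆ avail f E := by
  intro e he
  obtain ⟨heE', heE⟩ := mem_sdiff.1 he
  refine mem_avail.2 ⟨h.prop.2.1 e heE', heE, fun hred => ?_⟩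
  obtain ⟨w, hew, -⟩ := exists_tight_of_minimal_isFeasible h he
  obtain ⟨u, ⟨-, hu⟩, rfl⟩ := mem_spokes.1 hew
  exact Bool.false_ne_true ((hred u (Sym2.mem_mk_left u w)).symm.trans hu)

theorem redDeg_eq_blueDeg_of_minimal_isFeasible (h : Minimal (IsFeasible f E) E')
    (hv : f v = false) (hne : blueDeg f (E' \ E) v ≠ 0) : redDeg f E' v = blueDeg f E' v := by
  rw [blueDeg_eq_card_inter_spokes, card_ne_zero] at hne
  obtain ⟨e, he⟩ := hne
  obtain ⟨heS, hev⟩ := mem_inter.1 he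
  obtain ⟨w, hew, hw⟩ := exists_tight_of_minimal_isFeasible h heS
  -- The blue end of `e` only benefits from losing `e`, so the tight end is the red one.
  obtain rfl : w = v := eq_of_mem_spokes_of_mem_spokes (by simp [hv]) hev hew
  exact hw

theorem addCond_sdiff_of_minimal_isFeasible (h : Minimal (IsFeasible f E) E') :
    addCond f E (E' \ E) := by
  obtain ⟨hsub, -, hill⟩ := h.prop
  have hS : E' \ E ⊆ avail f E := sdiff_subset_avail_of_minimal_isFeasible h
  have hunion : E ∪ E' \ E = E' := union_sdiff_of_subset hsub
  obtain ⟨hred, hblue⟩ := (noIllusion_union_iff hS).1 (hunion.symm ▸ hill)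
  refine addCond_iff.2 ⟨hS, fun v hv => ?_, hblue⟩
  rcases eq_or_ne (blueDeg f (E' \ E) v) 0 with hzero | hne
  · have := hred v hv
    omega
  have htight := redDeg_eq_blueDeg_of_minimal_isFeasible h hv hne
  rw [← hunion, redDeg_union (disjoint_of_subset_avail hS),
    blueDeg_union (disjoint_of_subset_avail hS), redDeg_eq_zero_of_subset_avail hS hv] at htight
  omega

theorem IsFeasible.exists_addCond_subset_sdiff (h : IsFeasible f E E') :
    ∃ S ⊆ E' \ E, addCond f E S := by
  obtain ⟨M, hME', hM⟩ := exists_minimal_le_of_wellFoundedLT (IsFeasible f E) E' h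
  exact ⟨M \ E, sdiff_subset_sdiff hME' subset_rfl, addCond_sdiff_of_minimal_isFeasible hM⟩

theorem isLeast_card_sdiff_iff_isLeast_card_addCond (hE : Loopless E) (n : ℕ) :
    IsLeast {m | ∃ E', IsFeasible f E E' ∧ #(E' \ E) = m} n ↔
      IsLeast {m | ∃ S, addCond f E S ∧ #S = m} n := by
  apply isLeast_iff_of_isCoinitialFor
  · rintro m ⟨S, hS, rfl⟩
    exact ⟨E ∪ S, hS.isFeasible hE, by rw [hS.union_sdiff_self]⟩
  · rintro m ⟨E', hE', rfl⟩
    obtain ⟨S, hSE', hS⟩ := hE'.exists_addCond_subset_sdiff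
    exact ⟨#S, ⟨S, hS, rfl⟩, card_le_card hSE'⟩

theorem isFeasible_and_forall_card_le_iff (hE : Loopless E) :
    (IsFeasible f E E' ∧ ∀ E'', IsFeasible f E E'' → #(E' \ E) ≤ #(E'' \ E)) ↔
      ∃ S, addCond f E S ∧ (∀ S', addCond f E S' → #S ≤ #S') ∧ E' = E ∪ S := by
  constructor
  · rintro ⟨hE', hmin⟩
    have hle (S) (hS : addCond f E S) : #(E' \ E) ≤ #S := by
      simpa only [hS.union_sdiff_self] using hmin _ (hS.isFeasible hE)
    obtain ⟨S, hSE', hS⟩ := hE'.exists_addCond_subset_sdiff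
    obtain rfl : S = E' \ E := eq_of_subset_of_card_le hSE' (hle S hS)
    exact ⟨E' \ E, hS, hle, (union_sdiff_of_subset hE'.1).symm⟩
  · rintro ⟨S, hS, hmin, rfl⟩
    refine ⟨hS.isFeasible hE, fun E'' hE'' => ?_⟩
    obtain ⟨T, hTE'', hT⟩ := hE''.exists_addCond_subset_sdiff
    rw [hS.union_sdiff_self]
    exact (hmin T hT).trans (card_le_card hTE'')

end MajorityIllusion

theorem stmt10_general [Fintype V] [DecidableEq V] (f : V → Bool) (E : Finset (Sym2 V))
    (hE : Loopless E) :
    (∀ n : ℕ,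
      IsLeast {m : ℕ | ∃ E' : Finset (Sym2 V),
        (E ⊆ E' ∧ Loopless E' ∧ NoIllusion f E') ∧ (E' \ E).card = m} n ↔
      IsLeast {m : ℕ | ∃ S : Finset (Sym2 V), addCond f E S ∧ S.card = m} n) ∧
    (∀ E' : Finset (Sym2 V),
      ((E ⊆ E' ∧ Loopless E' ∧ NoIllusion f E') ∧
        (∀ E'' : Finset (Sym2 V), E ⊆ E'' → Loopless E'' → NoIllusion f E'' →
          (E' \ E).card ≤ (E'' \ E).card)) ↔
      (∃ S : Finset (Sym2 V), addCond f E S ∧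
        (∀ S' : Finset (Sym2 V), addCond f E S' → S.card ≤ S'.card) ∧ E' = E ∪ S)) := by
  refine ⟨isLeast_card_sdiff_iff_isLeast_card_addCond hE, fun E' => ?_⟩
  rw [← isFeasible_and_forall_card_le_iff hE]
  exact and_congr_right fun _ => forall_congr' fun _ => by simp only [IsFeasible, and_imp]

/-- The minimum number of added edges over feasible MIAE solutions equals the minimum
cardinality of an edge set `S ⊆ E*` satisfying conditions (i) and (ii); moreover the sets
`E ∪ S` for minimizers `S` are exactly the optimal MIAE solutions. -/
theorem stmt10 [Fintype V] [DecidableEq V] (f : V → Bool) (E : Finset (Sym2 V))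
    (hE : Loopless E)
    (hmaj : (Finset.univ.filter (fun v => f v = false)).card <
      (Finset.univ.filter (fun v => f v = true)).card) :
    (∀ n : ℕ,
      IsLeast {m : ℕ | ∃ E' : Finset (Sym2 V),
        (E ⊆ E' ∧ Loopless E' ∧ NoIllusion f E') ∧ (E' \ E).card = m} n ↔
      IsLeast {m : ℕ | ∃ S : Finset (Sym2 V), addCond f E S ∧ S.card = m} n) ∧
    (∀ E' : Finset (Sym2 V),
      ((E ⊆ E' ∧ Loopless E' ∧ NoIllusion f E') ∧
        (∀ E'' : Finset (Sym2 V), E ⊆ E'' → Loopless E'' → NoIllusion f E'' →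
          (E' \ E).card ≤ (E'' \ E).card)) ↔
      (∃ S : Finset (Sym2 V), addCond f E S ∧
        (∀ S' : Finset (Sym2 V), addCond f E S' → S.card ≤ S'.card) ∧ E' = E ∪ S)) :=
  stmt10_general f E hE
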